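/- Equivalence of the Caputo initial value problem with a Volterra integral equation: Let 0 < α < 1, a < b, let y : ℝ → ℝ be differentiable on [a,b] with y' integrable on [a,b] and y(a) = y_a, and let f : ℝ × ℝ → ℝ be such that ᶜD^α y(x) = f(x, y(x)) for all x ∈ (a,b]. Then for every x ∈ [a,b], y(x) = y_a + (1/Γ(α)) ∫_a^x (x−u)^(α−1) · f(u, y(u)) du. -/

import Mathlib

open MeasureTheory Real Set

lemma caputo_beta {α : ℝ} (hα : 0 < α) (hα1 : α < 1) {t x : ℝ} (h : t < x) :
    ∫ u in t..x, (x - u) ^ (α - 1) * (u - t) ^ (-α) = Real.Gamma α * Real.Gamma (1 - α) := by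
  have h1 : ∫ u in t..x, (x - u) ^ (α - 1) * (u - t) ^ (-α)
      = ∫ v in (0:ℝ)..(x - t), ((x - t) - v) ^ (α - 1) * v ^ (-α) := by
    have := intervalIntegral.integral_comp_sub_right (a := t) (b := x)
      (fun v : ℝ => ((x - t) - v) ^ (α - 1) * v ^ (-α)) t
    rw [sub_self] at this
    rw [← this]
    congr 1
    ext u
    congr 2
    ring
  rw [h1]
  have hpos : 0 < x - t := sub_pos.2 h
  have h2 := Complex.betaIntegral_scaled (1 - α : ℂ) (α : ℂ) hpos
  have h3 := Complex.Gamma_mul_Gamma_eq_betaIntegral (s := (1 - α : ℂ)) (t := (α : ℂ))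
    (by simpa using hα1) (by simpa using hα)
  have e : (1 - α + α : ℂ) = 1 := by ring
  rw [e, Complex.Gamma_one, one_mul] at h3
  rw [e, sub_self, Complex.cpow_zero, one_mul, ← h3] at h2
  have e2 : Complex.Gamma (1 - α : ℂ) = ((Real.Gamma (1 - α) : ℝ) : ℂ) := by
    rw [← Complex.Gamma_ofReal]; push_cast; rfl
  rw [e2, Complex.Gamma_ofReal] at h2
  apply Complex.ofReal_injective
  rw [mul_comm (Real.Gamma α)]
  push_cast
  rw [← h2, ← intervalIntegral.integral_ofReal]
  rw [intervalIntegral.integral_of_le hpos.le, intervalIntegral.integral_of_le hpos.le]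
  refine setIntegral_congr_fun measurableSet_Ioc fun v hv => ?_
  rw [Complex.ofReal_mul, Complex.ofReal_cpow (sub_nonneg.2 hv.2), Complex.ofReal_cpow hv.1.le,
    mul_comm]
  push_cast
  congr 2
  ring

lemma caputo_kernel {α : ℝ} (hα : 0 < α) (hα1 : α < 1) {a t x : ℝ} (hat : a < t) (h : t < x) :
    ∫ u in Ioc a x, (if t < u then (x - u) ^ (α - 1) * (u - t) ^ (-α) else 0)
      = Real.Gamma α * Real.Gamma (1 - α) := by
  rw [← caputo_beta hα hα1 h, intervalIntegral.integral_of_le h.le]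
  have : (fun u => if t < u then (x - u) ^ (α - 1) * (u - t) ^ (-α) else 0)
      = (Ioi t).indicator (fun u => (x - u) ^ (α - 1) * (u - t) ^ (-α)) := by
    ext u; simp [indicator]
  rw [this, setIntegral_indicator measurableSet_Ioi]
  congr 2
  ext u
  simp only [mem_inter_iff, mem_Ioc, mem_Ioi]
  constructor
  · rintro ⟨⟨_, h2⟩, h3⟩; exact ⟨h3, h2⟩
  · rintro ⟨h2, h3⟩; exact ⟨⟨hat.trans h2, h3⟩, h2⟩

lemma caputo_swap {α : ℝ} (hα : 0 < α) (hα1 : α < 1) {a x : ℝ} (hax : a < x) (g : ℝ → ℝ)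
    (hg : IntegrableOn g (Ioc a x)) :
    ∫ u in Ioc a x, ∫ t in Ioc a x,
      (if t < u then (x - u) ^ (α - 1) * (u - t) ^ (-α) else 0) * g t
      = Real.Gamma α * Real.Gamma (1 - α) * ∫ t in Ioc a x, g t := by
  have hB : 0 < Real.Gamma α * Real.Gamma (1 - α) :=
    mul_pos (Real.Gamma_pos_of_pos hα) (Real.Gamma_pos_of_pos (by linarith))
  have hae : ∀ᵐ t ∂(volume.restrict (Ioc a x)), a < t ∧ t < x := by
    rw [← restrict_Ioo_eq_restrict_Ioc]
    exact ae_restrict_mem measurableSet_Ioo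
  have hnn : ∀ t, ∀ᵐ u ∂(volume.restrict (Ioc a x)),
      0 ≤ (if t < u then (x - u) ^ (α - 1) * (u - t) ^ (-α) else 0) := by
    intro t
    filter_upwards [hae] with u hu
    split_ifs with htu
    · exact mul_nonneg (rpow_nonneg (by linarith) _) (rpow_nonneg (by linarith) _)
    · exact le_rfl
  have hmeas : Measurable (fun p : ℝ × ℝ =>
      (if p.2 < p.1 then (x - p.1) ^ (α - 1) * (p.1 - p.2) ^ (-α) else 0)) :=
    Measurable.ite (measurableSet_lt measurable_snd measurable_fst) (by fun_prop) (by fun_prop)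
  have hint : Integrable (Function.uncurry (fun u t : ℝ =>
      (if t < u then (x - u) ^ (α - 1) * (u - t) ^ (-α) else 0) * g t))
      ((volume.restrict (Ioc a x)).prod (volume.restrict (Ioc a x))) := by
    rw [integrable_prod_iff']
    · constructor
      · filter_upwards [hae] with t ht
        simp only [Function.uncurry]
        apply Integrable.mul_const
        by_contra hc
        have := integral_undef hc
        rw [caputo_kernel hα hα1 ht.1 ht.2] at this
        exact hB.ne' this
      · refine (hg.norm.const_mul (Real.Gamma α * Real.Gamma (1 - α))).congr ?_
        filter_upwards [hae] with t ht
        simp only [Function.uncurry, norm_mul]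
        rw [integral_mul_const, ← caputo_kernel hα hα1 ht.1 ht.2]
        congr 1
        apply integral_congr_ae
        filter_upwards [hnn t] with u hu
        rw [Real.norm_of_nonneg hu]
    · exact hmeas.aestronglyMeasurable.mul (hg.aestronglyMeasurable.comp_snd)
  rw [integral_integral_swap hint, ← integral_const_mul]
  apply integral_congr_ae
  filter_upwards [hae] with t ht
  rw [integral_mul_const, caputo_kernel hα hα1 ht.1 ht.2]

/-- Equivalence of the Caputo initial value problem with a Volterra integral
equation: if `ᶜD^α y x = f x (y x)` on `(a,b]` and `y a = y_a`, then
`y x = y_a + J^α (u ↦ f u (y u)) x` on `[a,b]`. -/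
theorem caputo_ivp_eq_volterra
    (α a b y_a : ℝ) (hα : 0 < α) (hα1 : α < 1) (hab : a < b)
    (y : ℝ → ℝ) (f : ℝ → ℝ → ℝ)
    (hdiff : ∀ x ∈ Set.Icc a b, DifferentiableAt ℝ y x)
    (hint : IntervalIntegrable (deriv y) volume a b)
    (hya : y a = y_a)
    (hode : ∀ x ∈ Set.Ioc a b,
      (1 / Real.Gamma (1 - α)) * ∫ u in a..x, deriv y u * (x - u) ^ (-α) =
        f x (y x)) :
    ∀ x ∈ Set.Icc a b,
      y x = y_a + (1 / Real.Gamma α) *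
        ∫ u in a..x, (x - u) ^ (α - 1) * f u (y u) := by
  intro x hx
  rcases eq_or_lt_of_le hx.1 with rfl | hax
  · simp [hya]
  have hsub : IntervalIntegrable (deriv y) volume a x :=
    hint.mono_set (by
      rw [uIcc_of_le hax.le, uIcc_of_le hab.le]
      exact Icc_subset_Icc_right hx.2)
  have hftc : ∫ t in a..x, deriv y t = y x - y a := by
    apply intervalIntegral.integral_eq_sub_of_hasDerivAt _ hsub
    intro t ht
    rw [uIcc_of_le hax.le] at ht
    exact (hdiff t ⟨ht.1, ht.2.trans hx.2⟩).hasDerivAt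
  have hg : IntegrableOn (deriv y) (Ioc a x) :=
    (intervalIntegrable_iff_integrableOn_Ioc_of_le hax.le).1 hsub
  have hsw := caputo_swap hα hα1 hax (deriv y) hg
  rw [← intervalIntegral.integral_of_le hax.le (f := deriv y), hftc] at hsw
  have hG1 : 0 < Real.Gamma α := Real.Gamma_pos_of_pos hα
  have hG2 : 0 < Real.Gamma (1 - α) := Real.Gamma_pos_of_pos (by linarith)
  have key : ∫ u in a..x, (x - u) ^ (α - 1) * f u (y u)
      = (1 / Real.Gamma (1 - α)) * ∫ u in Ioc a x, ∫ t in Ioc a x,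
        (if t < u then (x - u) ^ (α - 1) * (u - t) ^ (-α) else 0) * deriv y t := by
    rw [intervalIntegral.integral_of_le hax.le, ← integral_const_mul]
    refine setIntegral_congr_fun measurableSet_Ioc fun u hu => ?_
    rw [← hode u ⟨hu.1, hu.2.trans hx.2⟩, mul_left_comm]
    congr 1
    rw [intervalIntegral.integral_of_le hu.1.le, ← integral_const_mul]
    have e : (fun t => (if t < u then (x - u) ^ (α - 1) * (u - t) ^ (-α) else 0) * deriv y t)
        = (Iio u).indicator (fun t => (x - u) ^ (α - 1) * (deriv y t * (u - t) ^ (-α))) := by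
      ext t
      by_cases htu : t < u
      · simp [indicator, htu]; ring
      · simp [indicator, htu]
    rw [e, setIntegral_indicator measurableSet_Iio, ← integral_Ioc_eq_integral_Ioo.symm]
    congr 2
    ext t
    simp only [mem_inter_iff, mem_Ioc, mem_Iio, mem_Ioo]
    constructor
    · rintro ⟨h1, h2⟩; exact ⟨⟨h1, h2.le.trans hu.2⟩, h2⟩
    · rintro ⟨⟨h1, _⟩, h2⟩; exact ⟨h1, h2⟩
  rw [key, hsw, ← hya]
  field_simp
  ring
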